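/- Let f : (0,∞) → ℝ be a standard-type function and set f(0) := lim_{t→0+} f(t). Let D = diag(λ₁,…,λₙ) be a diagonal density matrix with all λᵢ > 0, and let A₁, A₂, …, A_m be self-adjoint n×n complex matrices. Then the dynamical uncertainty principle holds: det([Cov_D(Aᵢ,Aⱼ)]_{i,j=1}^m) ≥ det([(f(0)/2)·γ^f_D([D,Aᵢ],[D,Aⱼ])]_{i,j=1}^m), where Cov_D is the symmetrized covariance (the quantum g-covariance for g(x) = (1+x)/2, so M_g(a,b) = (a+b)/2). -/

import Mathlib

open scoped BigOperators ComplexConjugate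

noncomputable section

/-- A standard-type function: continuous, non-decreasing and concave on `(0,∞)`,
positive, with `f 1 = 1` and the symmetry `f t = t * f (1/t)`. -/
def StandardType (f : ℝ → ℝ) : Prop :=
  ContinuousOn f (Set.Ioi 0) ∧ MonotoneOn f (Set.Ioi 0) ∧
  ConcaveOn ℝ (Set.Ioi 0) f ∧ (∀ t : ℝ, 0 < t → 0 < f t) ∧
  f 1 = 1 ∧ ∀ t : ℝ, 0 < t → f t = t * f (1 / t)

/-- The mean associated to `f`: `M_f(a,b) = b * f (a/b)`. -/
def Mmean (f : ℝ → ℝ) (a b : ℝ) : ℝ := b * f (a / b)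

/-- The quantum `g`-covariance of `A` and `B` with respect to the diagonal density
matrix with eigenvalues `lam`. -/
def qCovC {n : ℕ} (g : ℝ → ℝ) (lam : Fin n → ℝ)
    (A B : Matrix (Fin n) (Fin n) ℂ) : ℂ :=
  (∑ i, ∑ j, (Mmean g (lam i) (lam j) : ℂ) * conj (A i j) * B i j)
    - (∑ i, (lam i : ℂ) * conj (A i i)) * (∑ i, (lam i : ℂ) * B i i)

/-- The quantum `f`-Fisher-information form evaluated at the commutators
`[D,A]`, `[D,B]`, for the diagonal density matrix `D` with eigenvalues `lam`. -/
def gammaCommC {n : ℕ} (f : ℝ → ℝ) (lam : Fin n → ℝ)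
    (A B : Matrix (Fin n) (Fin n) ℂ) : ℂ :=
  ∑ i, ∑ j, (((lam i - lam j) ^ 2 / Mmean f (lam i) (lam j) : ℝ) : ℂ)
      * conj (A i j) * B i j


/-- The symmetrized covariance of `A` and `B` with respect to the diagonal density
matrix with eigenvalues `lam`; it is the quantum `g`-covariance for
`g x = (1 + x)/2`, whose mean is the arithmetic mean. -/
def CovC {n : ℕ} (lam : Fin n → ℝ) (A B : Matrix (Fin n) (Fin n) ℂ) : ℂ :=
  (∑ i, ∑ j, (((lam i + lam j) / 2 : ℝ) : ℂ) * conj (A i j) * B i j)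
    - (∑ i, (lam i : ℂ) * conj (A i i)) * (∑ i, (lam i : ℂ) * B i i)

/-!
The determinant is monotone on positive semidefinite matrices in the Löwner order: if `B = T* T` is
invertible and `B ≤ A`, then `(T⁻¹)* A T⁻¹ ≥ 1` has all its eigenvalues at least `1`. So it suffices
to show that `Cov - (f(0)/2) γ` is positive semidefinite.

Up to the subtracted mean term of `Cov`, this difference is a sum over the matrix positions `(i, j)`
of the Gram matrices of the entries `(A k) i j` in the real inner product space `ℂ`, with weights
`(λᵢ + λⱼ)/2 - (f(0)/2) (λᵢ - λⱼ)² / M_f(λᵢ, λⱼ)`. They are nonnegative because `f ≥ f(0)` and the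
symmetry of `f` give `M_f(a, b) ≥ f(0) max(a, b)`, while `(a - b)² ≤ (a + b) max(a, b)`. On the
diagonal the weight is exactly `λᵢ`, so by Jensen's inequality for Gram matrices the diagonal
positions alone dominate the mean term.
-/

section LoewnerOrder

open scoped MatrixOrder ComplexOrder

variable {ι 𝕜 : Type*} [Fintype ι] [DecidableEq ι] [RCLike 𝕜]

theorem one_le_det_of_one_le {P : Matrix ι ι 𝕜} (hP : 1 ≤ P) : 1 ≤ P.det := by
  have hherm : P.IsHermitian := (Matrix.nonneg_iff_posSemidef.mp (zero_le_one.trans hP)).isHermitian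
  have heig : ∀ i, 1 ≤ hherm.eigenvalues i := fun i ↦
    (CFC.one_le_iff P hherm).mp hP _ (hherm.eigenvalues_mem_spectrum_real i)
  rw [hherm.det_eq_prod_eigenvalues]
  exact_mod_cast Finset.one_le_prod fun i _ ↦ heig i

theorem det_le_det_of_le {A B : Matrix ι ι 𝕜} (hB : 0 ≤ B) (hBA : B ≤ A) : B.det ≤ A.det := by
  by_cases hdet : B.det = 0
  · exact hdet ▸ (Matrix.nonneg_iff_posSemidef.mp (hB.trans hBA)).det_nonneg
  obtain ⟨T, rfl⟩ := CStarAlgebra.nonneg_iff_eq_star_mul_self.mp hB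
  have hT : IsUnit T.det := isUnit_iff_ne_zero.mpr fun h ↦
    hdet (by rw [Matrix.det_mul, h, mul_zero])
  have hTinv : T * T⁻¹ = 1 := T.mul_nonsing_inv hT
  have hstar : star T⁻¹ * star T = 1 := by rw [← star_mul, hTinv, star_one]
  have hone : 1 ≤ star T⁻¹ * A * T⁻¹ :=
    calc (1 : Matrix ι ι 𝕜) = star T⁻¹ * (star T * T) * T⁻¹ := by
          rw [← mul_assoc, hstar, one_mul, hTinv]
      _ ≤ star T⁻¹ * A * T⁻¹ := star_left_conjugate_le_conjugate hBA _
  calc (star T * T).det ≤ (star T * T).det * (star T⁻¹ * A * T⁻¹).det :=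
        le_mul_of_one_le_right (Matrix.nonneg_iff_posSemidef.mp hB).det_nonneg
          (one_le_det_of_one_le hone)
    _ = (star T⁻¹ * star T).det * A.det * (T * T⁻¹).det := by
        simp only [Matrix.det_mul]; ring
    _ = A.det := by rw [hstar, hTinv, Matrix.det_one, one_mul, mul_one]

end LoewnerOrder

section Gram

open scoped MatrixOrder

variable {α ι E : Type*} [SeminormedAddCommGroup E] [InnerProductSpace ℝ E]

theorem sum_mul_inner_sub_sum_smul {s : Finset α} {w : α → ℝ} (hw : ∑ i ∈ s, w i = 1)
    (a b : α → E) :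
    ∑ i ∈ s, w i * inner ℝ (a i - ∑ j ∈ s, w j • a j) (b i - ∑ j ∈ s, w j • b j) =
      ∑ i ∈ s, w i * inner ℝ (a i) (b i) -
        inner ℝ (∑ i ∈ s, w i • a i) (∑ i ∈ s, w i • b i) := by
  set μ := ∑ j ∈ s, w j • a j with hμ
  set ν := ∑ j ∈ s, w j • b j with hν
  have hleft : ∑ i ∈ s, w i * inner ℝ (a i) ν = inner ℝ μ ν := by
    simp only [hμ, sum_inner, real_inner_smul_left]
  have hright : ∑ i ∈ s, w i * inner ℝ μ (b i) = inner ℝ μ ν := by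
    simp only [hν, inner_sum, real_inner_smul_right]
  simp only [inner_sub_left, inner_sub_right, mul_sub, Finset.sum_sub_distrib, hleft, hright,
    ← Finset.sum_mul, hw]
  ring

theorem gram_sum_smul_le [Finite ι] {s : Finset α} {w : α → ℝ} (hw₀ : ∀ i ∈ s, 0 ≤ w i)
    (hw₁ : ∑ i ∈ s, w i = 1) (v : α → ι → E) :
    Matrix.gram ℝ (∑ i ∈ s, w i • v i) ≤ ∑ i ∈ s, w i • Matrix.gram ℝ (v i) := by
  have hcentred : ∑ i ∈ s, w i • Matrix.gram ℝ (v i) - Matrix.gram ℝ (∑ i ∈ s, w i • v i) =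
      ∑ i ∈ s, w i • Matrix.gram ℝ (v i - ∑ j ∈ s, w j • v j) := by
    ext k l
    simpa [Matrix.sum_apply] using
      (sum_mul_inner_sub_sum_smul hw₁ (fun i ↦ v i k) (fun i ↦ v i l)).symm
  rw [Matrix.le_iff, hcentred]
  exact Matrix.posSemidef_sum s fun i hi ↦ (Matrix.posSemidef_gram ℝ _).smul (hw₀ i hi)

theorem gram_sum_diag_smul_le [Fintype α] [Finite ι] {w : α → α → ℝ} (hw₀ : ∀ i j, 0 ≤ w i j)
    (hw₁ : ∑ i, w i i = 1) (v : α → α → ι → E) :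
    Matrix.gram ℝ (∑ i, w i i • v i i) ≤ ∑ i, ∑ j, w i j • Matrix.gram ℝ (v i j) :=
  calc Matrix.gram ℝ (∑ i, w i i • v i i)
      ≤ ∑ i, w i i • Matrix.gram ℝ (v i i) := gram_sum_smul_le (fun i _ ↦ hw₀ i i) hw₁ _
    _ ≤ ∑ i, ∑ j, w i j • Matrix.gram ℝ (v i j) := Finset.sum_le_sum fun i _ ↦
        Finset.single_le_sum (f := fun j ↦ w i j • Matrix.gram ℝ (v i j))
          (fun j _ ↦ ((Matrix.posSemidef_gram ℝ _).smul (hw₀ i j)).nonneg) (Finset.mem_univ i)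

end Gram

section Mean

theorem le_of_monotoneOn_Ioi_of_tendsto_nhdsGT {α β : Type*} [LinearOrder α] [TopologicalSpace α]
    [OrderTopology α] [DenselyOrdered α] [Preorder β] [TopologicalSpace β] [ClosedIicTopology β]
    {f : α → β} {x₀ x : α} {l : β} (hmono : MonotoneOn f (Set.Ioi x₀))
    (hl : Filter.Tendsto f (nhdsWithin x₀ (Set.Ioi x₀)) (nhds l)) (hx : x₀ < x) : l ≤ f x := by
  have := nhdsGT_neBot_of_exists_gt ⟨x, hx⟩
  refine le_of_tendsto hl ?_
  filter_upwards [Ioo_mem_nhdsGT hx] with t ht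
  exact hmono ht.1 hx ht.2.le

variable {f : ℝ → ℝ} {c a b : ℝ}

theorem Mmean_pos (hpos : ∀ t, 0 < t → 0 < f t) (ha : 0 < a) (hb : 0 < b) : 0 < Mmean f a b :=
  mul_pos hb (hpos _ (div_pos ha hb))

theorem Mmean_comm (hsymm : ∀ t, 0 < t → f t = t * f (1 / t)) (ha : 0 < a) (hb : 0 < b) :
    Mmean f a b = Mmean f b a := by
  rw [Mmean, Mmean, hsymm _ (div_pos ha hb), one_div_div, ← mul_assoc, mul_div_cancel₀ _ hb.ne']

theorem mul_max_le_Mmean (hc : ∀ t, 0 < t → c ≤ f t) (hsymm : ∀ t, 0 < t → f t = t * f (1 / t))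
    (ha : 0 < a) (hb : 0 < b) : c * max a b ≤ Mmean f a b := by
  have mul_right_le {x y : ℝ} (hx : 0 < x) (hy : 0 < y) : c * y ≤ Mmean f x y := by
    rw [mul_comm]
    exact mul_le_mul_of_nonneg_left (hc _ (div_pos hx hy)) hy.le
  rcases max_choice a b with h | h <;> rw [h]
  · exact Mmean_comm hsymm ha hb ▸ mul_right_le hb ha
  · exact mul_right_le ha hb

theorem sq_sub_le_add_mul_max (ha : 0 ≤ a) (hb : 0 ≤ b) : (a - b) ^ 2 ≤ (a + b) * max a b := by
  have hadd : |a - b| ≤ a + b := by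
    simpa only [abs_of_nonneg ha, abs_of_nonneg hb] using abs_sub a b
  have hmax : |a - b| ≤ max a b := abs_sub_le_iff.mpr
    ⟨(sub_le_self a hb).trans (le_max_left a b), (sub_le_self b ha).trans (le_max_right a b)⟩
  calc (a - b) ^ 2 = |a - b| * |a - b| := by rw [← sq, sq_abs]
    _ ≤ (a + b) * max a b := by gcongr

theorem half_mul_sq_sub_div_Mmean_le (hc₀ : 0 ≤ c) (hc : ∀ t, 0 < t → c ≤ f t)
    (hpos : ∀ t, 0 < t → 0 < f t) (hsymm : ∀ t, 0 < t → f t = t * f (1 / t))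
    (ha : 0 < a) (hb : 0 < b) : c / 2 * ((a - b) ^ 2 / Mmean f a b) ≤ (a + b) / 2 := by
  have hbound : c * (a - b) ^ 2 ≤ (a + b) * Mmean f a b :=
    calc c * (a - b) ^ 2 ≤ c * ((a + b) * max a b) := by
          gcongr; exact sq_sub_le_add_mul_max ha.le hb.le
      _ = (a + b) * (c * max a b) := by ring
      _ ≤ (a + b) * Mmean f a b := by gcongr; exact mul_max_le_Mmean hc hsymm ha hb
  calc c / 2 * ((a - b) ^ 2 / Mmean f a b) = c * (a - b) ^ 2 / Mmean f a b / 2 := by ring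
    _ ≤ (a + b) / 2 := by gcongr; exact (div_le_iff₀ (Mmean_pos hpos ha hb)).mpr hbound

end Mean

section Covariance

open scoped MatrixOrder

variable {n : ℕ} {ι : Type*}

/-- The covariance matrix of the observables `A k` in the state `diag lam`. The entries are the real
parts of `CovC`, which are the entries themselves when the `A k` are self-adjoint. -/
def covMatrix (lam : Fin n → ℝ) (A : ι → Matrix (Fin n) (Fin n) ℂ) : Matrix ι ι ℝ :=
  .of fun k l ↦ (CovC lam (A k) (A l)).re

/-- The quantum Fisher information matrix of the tangent vectors `[D, A k]` at `D = diag lam`. As in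
`covMatrix`, the entries are the real parts of the underlying form. -/
def fisherMatrix (f : ℝ → ℝ) (lam : Fin n → ℝ) (A : ι → Matrix (Fin n) (Fin n) ℂ) :
    Matrix ι ι ℝ :=
  .of fun k l ↦ (gammaCommC f lam (A k) (A l)).re

theorem re_ofReal_mul_conj_mul (w : ℝ) (x y : ℂ) :
    ((w : ℂ) * conj x * y).re = w * inner ℝ x y := by
  rw [mul_assoc, Complex.re_ofReal_mul, Complex.inner, mul_comm y]

theorem fisherMatrix_eq_sum_smul_gram (f : ℝ → ℝ) (lam : Fin n → ℝ)
    (A : ι → Matrix (Fin n) (Fin n) ℂ) :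
    fisherMatrix f lam A = ∑ i, ∑ j,
      ((lam i - lam j) ^ 2 / Mmean f (lam i) (lam j)) • Matrix.gram ℝ fun k ↦ A k i j := by
  ext k l
  simp only [fisherMatrix, gammaCommC, Matrix.of_apply, Complex.re_sum, re_ofReal_mul_conj_mul,
    Matrix.sum_apply, Matrix.smul_apply, Matrix.gram_apply, smul_eq_mul]

theorem covMatrix_eq_sum_smul_gram_sub (lam : Fin n → ℝ) (A : ι → Matrix (Fin n) (Fin n) ℂ) :
    covMatrix lam A = ∑ i, ∑ j, ((lam i + lam j) / 2) • Matrix.gram ℝ (fun k ↦ A k i j) -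
      Matrix.gram ℝ (∑ i, lam i • fun k ↦ A k i i) := by
  ext k l
  have hmeans : ((∑ i, (lam i : ℂ) * conj (A k i i)) * ∑ i, (lam i : ℂ) * A l i i).re =
      inner ℝ (∑ i, lam i • A k i i) (∑ i, lam i • A l i i) := by
    simp [Complex.inner, mul_comm]
  simp only [covMatrix, CovC, Matrix.of_apply, Complex.sub_re, hmeans, Complex.re_sum,
    re_ofReal_mul_conj_mul, Matrix.sub_apply, Matrix.sum_apply, Matrix.smul_apply,
    Matrix.gram_apply, smul_eq_mul, Finset.sum_apply, Pi.smul_apply]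

theorem fisherMatrix_nonneg [Finite ι] {f : ℝ → ℝ} (hpos : ∀ t, 0 < t → 0 < f t)
    {lam : Fin n → ℝ} (hlam : ∀ i, 0 < lam i) (A : ι → Matrix (Fin n) (Fin n) ℂ) :
    0 ≤ fisherMatrix f lam A := by
  rw [fisherMatrix_eq_sum_smul_gram]
  refine Finset.sum_nonneg fun i _ ↦ Finset.sum_nonneg fun j _ ↦ ?_
  exact ((Matrix.posSemidef_gram ℝ _).smul
    (div_nonneg (sq_nonneg _) (Mmean_pos hpos (hlam i) (hlam j)).le)).nonneg

theorem smul_fisherMatrix_le_covMatrix [Finite ι] {f : ℝ → ℝ} {c : ℝ} (hc₀ : 0 ≤ c)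
    (hc : ∀ t, 0 < t → c ≤ f t) (hpos : ∀ t, 0 < t → 0 < f t)
    (hsymm : ∀ t, 0 < t → f t = t * f (1 / t)) {lam : Fin n → ℝ} (hlam : ∀ i, 0 < lam i)
    (hsum : ∑ i, lam i = 1) (A : ι → Matrix (Fin n) (Fin n) ℂ) :
    (c / 2) • fisherMatrix f lam A ≤ covMatrix lam A := by
  let w (i j : Fin n) : ℝ :=
    (lam i + lam j) / 2 - c / 2 * ((lam i - lam j) ^ 2 / Mmean f (lam i) (lam j))
  have hw₀ (i j) : 0 ≤ w i j :=
    sub_nonneg.mpr (half_mul_sq_sub_div_Mmean_le hc₀ hc hpos hsymm (hlam i) (hlam j))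
  have hdiag (i) : w i i = lam i := by simp [w]
  have hJensen := gram_sum_diag_smul_le hw₀ (by simpa only [hdiag] using hsum) fun i j k ↦ A k i j
  rw [covMatrix_eq_sum_smul_gram_sub, fisherMatrix_eq_sum_smul_gram, le_sub_comm]
  simpa only [hdiag, w, sub_smul, mul_smul, Finset.sum_sub_distrib, Finset.smul_sum] using hJensen

end Covariance

theorem dynamical_uncertainty_principle_general {n : ℕ} {ι : Type*} [Fintype ι] [DecidableEq ι]
    {f : ℝ → ℝ} (hmono : MonotoneOn f (Set.Ioi 0)) (hpos : ∀ t, 0 < t → 0 < f t)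
    (hsymm : ∀ t, 0 < t → f t = t * f (1 / t)) {f0 : ℝ}
    (hf0 : Filter.Tendsto f (nhdsWithin 0 (Set.Ioi 0)) (nhds f0))
    {lam : Fin n → ℝ} (hlam : ∀ i, 0 < lam i) (hsum : ∑ i, lam i = 1)
    (A : ι → Matrix (Fin n) (Fin n) ℂ) :
    ((f0 / 2) • fisherMatrix f lam A).det ≤ (covMatrix lam A).det := by
  have hf0_nonneg : 0 ≤ f0 :=
    ge_of_tendsto hf0 (eventually_mem_nhdsWithin.mono fun t ht ↦ (hpos t ht).le)
  have hf0_le (t : ℝ) (ht : 0 < t) : f0 ≤ f t :=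
    le_of_monotoneOn_Ioi_of_tendsto_nhdsGT hmono hf0 ht
  open scoped MatrixOrder in
  have hfisher : 0 ≤ (f0 / 2) • fisherMatrix f lam A :=
    smul_nonneg (div_nonneg hf0_nonneg zero_le_two) (fisherMatrix_nonneg hpos hlam A)
  exact det_le_det_of_le hfisher <|
    smul_fisherMatrix_le_covMatrix hf0_nonneg hf0_le hpos hsymm hlam hsum A

theorem dynamical_uncertainty_principle
    {n m : ℕ} (f : ℝ → ℝ) (hf : StandardType f) (f0 : ℝ)
    (hf0 : Filter.Tendsto f (nhdsWithin 0 (Set.Ioi 0)) (nhds f0))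
    (lam : Fin n → ℝ) (hlam : ∀ i, 0 < lam i) (hsum : ∑ i, lam i = 1)
    (A : Fin m → Matrix (Fin n) (Fin n) ℂ) (hA : ∀ k, (A k).IsHermitian) :
    Matrix.det (Matrix.of fun i j => (CovC lam (A i) (A j)).re) ≥
      Matrix.det (Matrix.of fun i j => f0 / 2 * (gammaCommC f lam (A i) (A j)).re) := by
  obtain ⟨-, hmono, -, hpos, -, hsymm⟩ := hf
  exact dynamical_uncertainty_principle_general hmono hpos hsymm hf0 hlam hsum A
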